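/- Let X, Y be Banach spaces, V ⊂ ℝ open, and u : V → L(X;Y) such that for every x ∈ X the orbit t ↦ u(t)x is real analytic on V. Then there exists an open set U ⊂ ℂ containing V such that u extends to a holomorphic function U → L(X;Y); moreover, for every t ∈ V there is a radius r_t > 0, independent of x, such that every orbit is given by its Taylor series at t on (t−r_t, t+r_t). -/

import Mathlib

/-!
Analyticity of all orbits at a single point `t` already forces analyticity of `u` at `t` in operator
norm, and everything else is one-variable function theory for Banach-valued functions.

The Taylor coefficients of the orbits are bounded operators, by Banach–Steinhaus applied to iterated
slopes at `t`. An orbit is analytic at `t` exactly when, for some `N` and `C`, its `n`-th Taylor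
remainder at `t + z` is at most `C * ((N + 1) * ‖z‖) ^ n` for all `n` and all `‖z‖ < 1 / (N + 1)`.
Only the countable parameter `N` and the constant `C` depend on the orbit, so the Baire category
theorem gives one `N` and one `C` that bound the remainder operators in norm.

A real analytic function extends near each point by its own power series in a complex variable. Two
such extensions agree on the overlap of their discs: the discs have real centres, so the overlap is
convex and, with `z`, contains `z.re`, near which both extensions equal the given function.
-/

open Filter Function Metric Set Topology

section UniformBoundedness

variable {𝕜 X Y : Type*} [NontriviallyNormedField 𝕜] [SeminormedAddCommGroup X] [NormedSpace 𝕜 X]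
  [CompleteSpace X] [SeminormedAddCommGroup Y] [NormedSpace 𝕜 Y]

theorem banach_steinhaus_weighted_of_countable {ι : Type*} [Countable ι] {κ : ι → Type*}
    {T : ∀ i, κ i → X →L[𝕜] Y} {w : ∀ i, κ i → ℝ} (hw : ∀ i j, 0 ≤ w i j)
    (h : ∀ x, ∃ i, ∃ C : ℝ, ∀ j, ‖T i j x‖ ≤ C * w i j) :
    ∃ i, ∃ C : ℝ, ∀ j, ‖T i j‖ ≤ C * w i j := by
  let S : ι × ℕ → Set X := fun a => {x | ∀ j, ‖T a.1 j x‖ ≤ a.2 * w a.1 j}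
  have hS_closed (a) : IsClosed (S a) := by
    simp only [S, ofPred_forall]
    exact isClosed_iInter fun j => isClosed_le (T a.1 j).continuous.norm continuous_const
  have hS_cover : ⋃ a, S a = univ := eq_univ_of_forall fun x => by
    obtain ⟨i, C, hC⟩ := h x
    obtain ⟨n, hn⟩ := exists_nat_ge C
    exact mem_iUnion.2 ⟨(i, n), fun j => (hC j).trans (mul_le_mul_of_nonneg_right hn (hw i j))⟩
  obtain ⟨⟨i, n⟩, x₀, hx₀⟩ := nonempty_interior_of_iUnion_of_closed hS_closed hS_cover
  obtain ⟨ε, hε, hball⟩ := Metric.mem_nhds_iff.1 (mem_interior_iff_mem_nhds.1 hx₀)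
  obtain ⟨c, hc⟩ := NormedField.exists_one_lt_norm 𝕜
  refine ⟨i, 2 * n * (‖c‖ / ε), fun j => ?_⟩
  have hwj := hw i j
  refine ContinuousLinearMap.opNorm_le_of_shell hε (by positivity) hc fun y hy_ge hy_lt => ?_
  have hcy : 1 ≤ ‖c‖ / ε * ‖y‖ := by
    rwa [← inv_div, inv_mul_eq_div, one_le_div (by positivity)]
  calc ‖T i j y‖ = ‖T i j (x₀ + y) - T i j x₀‖ := by simp
    _ ≤ ‖T i j (x₀ + y)‖ + ‖T i j x₀‖ := norm_sub_le _ _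
    _ ≤ n * w i j + n * w i j :=
      add_le_add (hball (by simpa using hy_lt) j) (hball (mem_ball_self hε) j)
    _ = 2 * n * w i j * 1 := by ring
    _ ≤ 2 * n * w i j * (‖c‖ / ε * ‖y‖) := by gcongr
    _ = 2 * n * (‖c‖ / ε) * w i j * ‖y‖ := by ring

end UniformBoundedness

section OperatorAnalyticity

theorem hasSum_of_norm_sub_sum_range_le_geometric {E : Type*} [SeminormedAddCommGroup E]
    {a : ℕ → E} {s : E} {C q : ℝ} (hq : |q| < 1)
    (h : ∀ n, ‖s - ∑ i ∈ Finset.range n, a i‖ ≤ C * q ^ n) : HasSum a s := by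
  have hgeom : Summable fun n => C * q ^ n := (summable_geometric_of_abs_lt_one hq).mul_left C
  have hterm (n : ℕ) : ‖a n‖ ≤ C * q ^ n + C * q ^ (n + 1) := by
    have hsplit :
        a n = (s - ∑ i ∈ Finset.range n, a i) - (s - ∑ i ∈ Finset.range (n + 1), a i) := by
      rw [Finset.sum_range_succ]
      abel
    rw [hsplit]
    exact (norm_sub_le _ _).trans (add_le_add (h n) (h (n + 1)))
  have hsummable : Summable fun n => ‖a n‖ :=
    .of_nonneg_of_le (fun _ => norm_nonneg _) hterm (hgeom.add ((summable_nat_add_iff 1).2 hgeom))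
  rw [hasSum_iff_tendsto_nat_of_summable_norm hsummable, tendsto_iff_norm_sub_tendsto_zero]
  exact squeeze_zero (fun _ => norm_nonneg _) (fun n => norm_sub_rev s _ ▸ h n)
    hgeom.tendsto_atTop_zero

variable {𝕂 : Type*} [NontriviallyNormedField 𝕂] {t : 𝕂}

theorem exists_norm_sub_sum_range_le_of_hasFPowerSeriesAt {E : Type*} [NormedAddCommGroup E]
    [NormedSpace 𝕂 E] {f : 𝕂 → E} {p : FormalMultilinearSeries 𝕂 𝕂 E}
    (hp : HasFPowerSeriesAt f p t) :
    ∃ (N : ℕ) (C : ℝ), ∀ z ∈ ball (0 : 𝕂) (1 / (N + 1)), ∀ n,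
      ‖f (t + z) - ∑ i ∈ Finset.range n, z ^ i • p.coeff i‖ ≤ C * ((N + 1) * ‖z‖) ^ n := by
  obtain ⟨r, hr⟩ := hp
  obtain ⟨ρ, hρ, hρr⟩ := ENNReal.lt_iff_exists_nnreal_btwn.1 hr.r_pos
  obtain ⟨a, ⟨ha₀, ha₁⟩, C, hC, hbound⟩ := hr.uniform_geometric_approx' hρr
  obtain ⟨N, hN⟩ := exists_nat_one_div_lt (K := ℝ) (ENNReal.coe_pos.1 hρ)
  refine ⟨N, C, fun z hz n => ?_⟩
  have hρ_inv : (ρ : ℝ)⁻¹ ≤ N + 1 := inv_le_of_inv_le₀ (by positivity) (by simpa using hN.le)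
  have hrate : a * (‖z‖ / ρ) ≤ (N + 1) * ‖z‖ := by
    rw [div_eq_inv_mul]
    exact (mul_le_of_le_one_left (by positivity) ha₁.le).trans (by gcongr)
  calc ‖f (t + z) - ∑ i ∈ Finset.range n, z ^ i • p.coeff i‖
      = ‖f (t + z) - p.partialSum n z‖ := by simp [FormalMultilinearSeries.partialSum]
    _ ≤ C * (a * (‖z‖ / ρ)) ^ n := hbound z (ball_subset_ball hN.le hz) n
    _ ≤ C * ((N + 1) * ‖z‖) ^ n := by gcongr

variable {𝕜 X Y : Type*} [NontriviallyNormedField 𝕜] [NormedAddCommGroup X] [NormedSpace 𝕜 X]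
  [CompleteSpace X] [NormedAddCommGroup Y] [NormedSpace 𝕜 Y] [NormedSpace 𝕂 Y]
  [SMulCommClass 𝕜 𝕂 Y] {u : 𝕂 → X →L[𝕜] Y}

theorem exists_clm_apply_eq_dslope (h : ∀ x, DifferentiableAt 𝕂 (fun s => u s x) t) :
    ∃ v : 𝕂 → X →L[𝕜] Y, ∀ x, (fun s => v s x) = dslope (fun s => u s x) t := by
  have hlim : Tendsto (fun s x => slope u t s x) (𝓝[≠] t)
      (𝓝 fun x => deriv (fun s => u s x) t) :=
    tendsto_pi_nhds.2 fun x => hasDerivAt_iff_tendsto_slope.1 (h x).hasDerivAt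
  classical
  refine ⟨update (slope u t) t (continuousLinearMapOfTendsto _ hlim), fun x => funext fun s => ?_⟩
  obtain rfl | hs := eq_or_ne s t
  · rw [update_self, dslope_same]
    rfl
  · rw [update_of_ne hs, dslope_of_ne _ hs]
    rfl

-- Iterated slopes at `t` stand in for iterated derivatives, which near `t` exist only on a
-- neighbourhood that depends on `x`.
theorem exists_clm_apply_eq_iterate_dslope (h : ∀ x, AnalyticAt 𝕂 (fun s => u s x) t) (k : ℕ) :
    ∃ v : 𝕂 → X →L[𝕜] Y, ∀ x, (fun s => v s x) = (swap dslope t)^[k] (fun s => u s x) := by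
  induction k with
  | zero => exact ⟨u, fun _ => rfl⟩
  | succ k ih =>
    obtain ⟨v, hv⟩ := ih
    have hv_diff (x) : DifferentiableAt 𝕂 (fun s => v s x) t := by
      obtain ⟨p, hp⟩ := h x
      rw [hv x]
      exact (hp.has_fpower_series_iterate_dslope_fslope k).differentiableAt
    obtain ⟨v', hv'⟩ := exists_clm_apply_eq_dslope hv_diff
    exact ⟨v', fun x => by rw [hv' x, hv x, iterate_succ_apply']⟩

theorem exists_clm_apply_eq_coeff {p : X → FormalMultilinearSeries 𝕂 𝕂 Y}
    (hp : ∀ x, HasFPowerSeriesAt (fun s => u s x) (p x) t) :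
    ∃ A : ℕ → X →L[𝕜] Y, ∀ k x, A k x = (p x).coeff k := by
  choose v hv using exists_clm_apply_eq_iterate_dslope fun x => (hp x).analyticAt
  refine ⟨fun k => v k t, fun k x => ?_⟩
  have hcoeff := ((hp x).has_fpower_series_iterate_dslope_fslope k).coeff_zero 1
  rw [← hv k x, ← FormalMultilinearSeries.coeff, FormalMultilinearSeries.coeff_iterate_fslope,
    zero_add] at hcoeff
  exact hcoeff.symm

theorem analyticAt_clm_of_forall_apply (h : ∀ x, AnalyticAt 𝕂 (fun s => u s x) t) :
    AnalyticAt 𝕂 u t := by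
  choose p hp using h
  obtain ⟨A, hA⟩ := exists_clm_apply_eq_coeff hp
  obtain ⟨N, C, hC⟩ := banach_steinhaus_weighted_of_countable
    (κ := fun N : ℕ => ball (0 : 𝕂) (1 / (N + 1)) × ℕ)
    (T := fun _ j => u (t + j.1) - ∑ i ∈ Finset.range j.2, (j.1 : 𝕂) ^ i • A i)
    (w := fun N j => ((N + 1) * ‖(j.1 : 𝕂)‖) ^ j.2) (fun _ _ => by positivity) fun x => by
      obtain ⟨N, C, hC⟩ := exists_norm_sub_sum_range_le_of_hasFPowerSeriesAt (hp x)
      exact ⟨N, C, fun j => by simpa [hA] using hC j.1 j.1.2 j.2⟩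
  refine ⟨fun n => ContinuousMultilinearMap.mkPiRing 𝕂 (Fin n) (A n), hasFPowerSeriesAt_iff.2 ?_⟩
  filter_upwards [ball_mem_nhds (0 : 𝕂) (Nat.one_div_pos_of_nat (α := ℝ) (n := N))] with z hz
  have hq : |(N + 1) * ‖z‖| < 1 := by
    rw [abs_of_nonneg (by positivity), mul_comm, ← lt_div_iff₀ (by positivity)]
    exact mem_ball_zero_iff.1 hz
  have hsum : HasSum (fun n => z ^ n • A n) (u (t + z)) :=
    hasSum_of_norm_sub_sum_range_le_geometric hq fun n => hC (⟨z, hz⟩, n)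
  simpa [FormalMultilinearSeries.coeff] using hsum

end OperatorAnalyticity

section TaylorSeries

variable {𝕂 E : Type*} [NontriviallyNormedField 𝕂] [CharZero 𝕂] [NormedAddCommGroup E]
  [NormedSpace 𝕂 E] [CompleteSpace E]

theorem hasSum_iteratedDeriv_of_hasFPowerSeriesOnBall {f : 𝕂 → E}
    {p : FormalMultilinearSeries 𝕂 𝕂 E} {t s : 𝕂} {r : ENNReal}
    (hf : HasFPowerSeriesOnBall f p t r) (hs : s ∈ eball t r) :
    HasSum (fun k : ℕ => ((s - t) ^ k / (k.factorial : 𝕂)) • iteratedDeriv k f t) (f s) := by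
  have hs' : s - t ∈ eball 0 r := by simpa [edist_eq_enorm_sub] using hs
  convert hf.hasSum_iteratedFDeriv hs' using 2 with k
  · rw [iteratedFDeriv_apply_eq_iteratedDeriv_mul_prod]
    simp [div_eq_inv_mul, mul_smul]
  · rw [add_sub_cancel]

theorem exists_forall_hasSum_iteratedDeriv_clm_apply {𝕜 X : Type*} [NontriviallyNormedField 𝕜]
    [NormedAddCommGroup X] [NormedSpace 𝕜 X] [NormedSpace 𝕜 E] [SMulCommClass 𝕜 𝕂 E]
    {u : 𝕂 → X →L[𝕜] E} {t : 𝕂} (hu : AnalyticAt 𝕂 u t) :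
    ∃ r : ℝ, 0 < r ∧ ∀ x s, ‖s - t‖ < r →
      HasSum (fun k : ℕ => ((s - t) ^ k / (k.factorial : 𝕂)) • iteratedDeriv k (fun τ => u τ x) t)
        (u s x) := by
  obtain ⟨p, R, hp⟩ := hu
  obtain ⟨r, hr, hrR⟩ := Metric.mem_nhds_iff.1 (eball_mem_nhds t hp.r_pos)
  refine ⟨r, hr, fun x s hs => ?_⟩
  let eval : (X →L[𝕜] E) →L[𝕂] E :=
    { toFun := fun A => A x
      map_add' := fun _ _ => rfl
      map_smul' := fun _ _ => rfl
      cont := (ContinuousLinearMap.apply 𝕜 E x).continuous }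
  exact hasSum_iteratedDeriv_of_hasFPowerSeriesOnBall (eval.comp_hasFPowerSeriesOnBall hp)
    (hrR (mem_ball_iff_norm.2 hs))

end TaylorSeries

section HolomorphicExtension

theorem exists_analyticAt_extension {𝕂 𝕃 E : Type*} [NontriviallyNormedField 𝕂]
    [NontriviallyNormedField 𝕃] [NormedAlgebra 𝕂 𝕃] [NormedAddCommGroup E] [NormedSpace 𝕂 E]
    [NormedSpace 𝕃 E] [IsScalarTower 𝕂 𝕃 E] [CompleteSpace E] {f : 𝕂 → E} {t : 𝕂}
    (hf : AnalyticAt 𝕂 f t) :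
    ∃ F : 𝕃 → E, AnalyticAt 𝕃 F (algebraMap 𝕂 𝕃 t) ∧ ∀ᶠ s in 𝓝 t, F (algebraMap 𝕂 𝕃 s) = f s := by
  obtain ⟨p, hp⟩ := hf
  let q : FormalMultilinearSeries 𝕃 𝕃 E :=
    fun n => ContinuousMultilinearMap.mkPiRing 𝕃 (Fin n) (p.coeff n)
  have hq : 0 < q.radius := hp.radius_pos.trans_le <|
    FormalMultilinearSeries.radius_le_of_le fun n => by simp [q]
  refine ⟨fun z => q.sum (z - algebraMap 𝕂 𝕃 t), ?_, ?_⟩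
  · simpa using ((q.hasFPowerSeriesOnBall hq).comp_sub (algebraMap 𝕂 𝕃 t)).analyticAt
  · filter_upwards [hasFPowerSeriesAt_iff'.1 hp] with s hs
    simp [FormalMultilinearSeries.sum, q, ← map_sub, ← map_pow, hs.tsum_eq]

theorem exists_forall_eqOn_of_pairwise_eqOn {ι α β : Type*} [Nonempty β] {s : ι → Set α}
    {f : ι → α → β} (h : ∀ i j, EqOn (f i) (f j) (s i ∩ s j)) :
    ∃ g : α → β, ∀ i, EqOn g (f i) (s i) := by
  have hvalue (a : α) : ∃ b, ∀ i, a ∈ s i → b = f i a := by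
    by_cases ha : ∃ i, a ∈ s i
    · obtain ⟨i, hi⟩ := ha
      exact ⟨f i a, fun j hj => h i j ⟨hi, hj⟩⟩
    · exact ⟨Classical.arbitrary β, fun i hi => (ha ⟨i, hi⟩).elim⟩
  choose g hg using hvalue
  exact ⟨g, fun i a ha => hg a i ha⟩

variable {E : Type*} [NormedAddCommGroup E] [NormedSpace ℂ E]

theorem eqOn_of_isPreconnected_of_eventuallyEq_ofReal {F G : ℂ → E} {W : Set ℂ} {t : ℝ}
    (hF : AnalyticOnNhd ℂ F W) (hG : AnalyticOnNhd ℂ G W) (hW : IsPreconnected W)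
    (ht : (t : ℂ) ∈ W) (hFG : ∀ᶠ s : ℝ in 𝓝 t, F s = G s) : EqOn F G W := by
  have hofReal : Tendsto Complex.ofReal (𝓝[≠] t) (𝓝[≠] (t : ℂ)) :=
    Complex.continuous_ofReal.continuousWithinAt.tendsto_nhdsWithin fun s hs => by simpa using hs
  exact hF.eqOn_of_preconnected_of_frequently_eq hG hW ht
    (hofReal.frequently (hFG.filter_mono nhdsWithin_le_nhds).frequently)

theorem ofReal_re_mem_ball {t r : ℝ} {z : ℂ} (hz : z ∈ ball (t : ℂ) r) :
    (z.re : ℂ) ∈ ball (t : ℂ) r := by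
  rw [mem_ball_iff_norm] at hz ⊢
  calc ‖(z.re : ℂ) - t‖ = |(z - t).re| := by simp [← Complex.ofReal_sub]
    _ ≤ ‖z - t‖ := Complex.abs_re_le_norm _
    _ < r := hz

theorem exists_analyticOnNhd_ball_extension [CompleteSpace E] {f : ℝ → E} {t : ℝ}
    (hf : AnalyticAt ℝ f t) :
    ∃ r > 0, ∃ F : ℂ → E, AnalyticOnNhd ℂ F (ball (t : ℂ) r) ∧
      ∀ s : ℝ, (s : ℂ) ∈ ball (t : ℂ) r → F s = f s := by
  obtain ⟨F, hF, hFf⟩ := exists_analyticAt_extension (𝕃 := ℂ) hf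
  rw [Complex.isometry_ofReal.isEmbedding.nhds_eq_comap, eventually_comap] at hFf
  obtain ⟨r, hr, hball⟩ := Metric.eventually_nhds_iff_ball.1 (hF.eventually_analyticAt.and hFf)
  exact ⟨r, hr, F, fun z hz => (hball z hz).1, fun s hs => (hball s hs).2 s rfl⟩

theorem exists_holomorphic_extension_of_analyticOnNhd [CompleteSpace E] {f : ℝ → E} {V : Set ℝ}
    (hf : AnalyticOnNhd ℝ f V) :
    ∃ U : Set ℂ, IsOpen U ∧ (∀ t ∈ V, (t : ℂ) ∈ U) ∧
      ∃ F : ℂ → E, DifferentiableOn ℂ F U ∧ ∀ t ∈ V, F t = f t := by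
  choose r hr F hF hFf using fun t : V => exists_analyticOnNhd_ball_extension (hf t t.2)
  have hcompat (a b : V) : EqOn (F a) (F b) (ball (a : ℂ) (r a) ∩ ball (b : ℂ) (r b)) := by
    rintro z ⟨hza, hzb⟩
    have hre : (z.re : ℂ) ∈ ball (a : ℂ) (r a) ∩ ball (b : ℂ) (r b) :=
      ⟨ofReal_re_mem_ball hza, ofReal_re_mem_ball hzb⟩
    refine eqOn_of_isPreconnected_of_eventuallyEq_ofReal ((hF a).mono inter_subset_left)
      ((hF b).mono inter_subset_right) ((convex_ball _ _).inter (convex_ball _ _)).isPreconnected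
      hre ?_ ⟨hza, hzb⟩
    filter_upwards [Complex.continuous_ofReal.continuousAt.preimage_mem_nhds
      ((isOpen_ball.inter isOpen_ball).mem_nhds hre)] with s hs
    rw [hFf a s hs.1, hFf b s hs.2]
  obtain ⟨G, hG⟩ := exists_forall_eqOn_of_pairwise_eqOn hcompat
  refine ⟨⋃ t : V, ball (t : ℂ) (r t), isOpen_iUnion fun _ => isOpen_ball,
    fun t ht => mem_iUnion.2 ⟨⟨t, ht⟩, mem_ball_self (hr _)⟩, G, ?_, fun t ht => ?_⟩
  · refine DifferentiableOn.iUnion_of_isOpen (fun t => ?_) fun _ => isOpen_ball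
    exact (hF t).differentiableOn.congr (hG t)
  · have htt := mem_ball_self (x := (t : ℂ)) (hr ⟨t, ht⟩)
    rw [hG ⟨t, ht⟩ htt, hFf ⟨t, ht⟩ t htt]

end HolomorphicExtension

theorem analytic_orbits_holomorphic_extension_and_uniform_radius_general
    {𝕜 X Y : Type*} [NontriviallyNormedField 𝕜]
    [NormedAddCommGroup X] [NormedSpace 𝕜 X] [CompleteSpace X]
    [NormedAddCommGroup Y] [NormedSpace 𝕜 Y] [NormedSpace ℂ Y] [SMulCommClass 𝕜 ℂ Y]
    [CompleteSpace Y] (V : Set ℝ) (u : ℝ → X →L[𝕜] Y)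
    (h : ∀ x : X, ∀ t ∈ V, AnalyticAt ℝ (fun s : ℝ => u s x) t) :
    (∃ U : Set ℂ, IsOpen U ∧ (∀ t ∈ V, (t : ℂ) ∈ U) ∧
      ∃ F : ℂ → X →L[𝕜] Y, DifferentiableOn ℂ F U ∧ ∀ t ∈ V, F (t : ℂ) = u t) ∧
    (∀ t ∈ V, ∃ r : ℝ, 0 < r ∧ ∀ x : X, ∀ s : ℝ, |s - t| < r →
      HasSum (fun k : ℕ => ((s - t) ^ k / (k.factorial : ℝ)) •
        iteratedDeriv k (fun τ : ℝ => u τ x) t) (u s x)) := by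
  have := SMulCommClass.symm 𝕜 ℂ Y
  have := SMulCommClass.symm ℝ 𝕜 Y
  have hu : AnalyticOnNhd ℝ u V := fun t ht => analyticAt_clm_of_forall_apply fun x => h x t ht
  exact ⟨exists_holomorphic_extension_of_analyticOnNhd hu,
    fun t ht => exists_forall_hasSum_iteratedDeriv_clm_apply (hu t ht)⟩

/-- If every orbit of `u : V → L(X;Y)` is real analytic on the open set `V ⊆ ℝ`,
then `u` extends holomorphically to an open set `U ⊆ ℂ` containing `V`; moreover,
around every point `t ∈ V` there is a radius `r > 0`, independent of `x`, on which
every orbit is given by its Taylor series at `t`. -/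
theorem analytic_orbits_holomorphic_extension_and_uniform_radius
    {X Y : Type*} [NormedAddCommGroup X] [NormedSpace ℂ X] [CompleteSpace X]
    [NormedAddCommGroup Y] [NormedSpace ℂ Y] [CompleteSpace Y]
    (V : Set ℝ) (hV : IsOpen V) (u : ℝ → X →L[ℂ] Y)
    (h : ∀ x : X, ∀ t ∈ V, AnalyticAt ℝ (fun s : ℝ => u s x) t) :
    (∃ U : Set ℂ, IsOpen U ∧ (∀ t ∈ V, (t : ℂ) ∈ U) ∧
      ∃ F : ℂ → X →L[ℂ] Y, DifferentiableOn ℂ F U ∧ ∀ t ∈ V, F (t : ℂ) = u t) ∧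
    (∀ t ∈ V, ∃ r : ℝ, 0 < r ∧ ∀ x : X, ∀ s : ℝ, |s - t| < r →
      u s x = ∑' k : ℕ,
        ((s - t) ^ k / (k.factorial : ℝ)) •
          iteratedDeriv k (fun τ : ℝ => u τ x) t) := by
  obtain ⟨hext, hradius⟩ := analytic_orbits_holomorphic_extension_and_uniform_radius_general V u h
  exact ⟨hext, fun t ht => (hradius t ht).imp fun r hr =>
    ⟨hr.1, fun x s hs => (hr.2 x s hs).tsum_eq.symm⟩⟩
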